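/- Let T ≥ 1, λ ∈ (0, 1], let N ∈ ℝ^T be a vector with positive entries N_t, and for each t let ȳ_t be the sample average of N_t values y_{ti}, so that Σ_{s=1}^T Σ_{i=1}^{N_s} y_{si} = Σ_{s=1}^T N_s ȳ_s. Then the estimator that shrinks each sample average toward the pooled mean, Ŷ_t = λ ȳ_t + (1−λ)/(Σ_{r=1}^T N_r) · Σ_{s=1}^T Σ_{i=1}^{N_s} y_{si}, satisfies Ŷ = (I + ((1−λ)/(λ Nᵀ𝟙)) L(𝟙 Nᵀ))⁻¹ ȳ, where 𝟙 is the all-ones vector and L(𝟙 Nᵀ) is the graph Laplacian of 𝟙 Nᵀ; in particular this estimator is of MTA form. -/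

import Mathlib

open Matrix BigOperators

/-- Graph Laplacian `L(A) = D - A` where `D` is the diagonal matrix of row sums. -/
noncomputable def graphLaplacian {T : ℕ} (A : Matrix (Fin T) (Fin T) ℝ) :
    Matrix (Fin T) (Fin T) ℝ :=
  Matrix.diagonal (fun t => ∑ s, A t s) - A

/-- `𝟙 Nᵀ` has constant row sums `∑ r, N r`, so its Laplacian is `(∑ r, N r) • I - 𝟙 Nᵀ`. -/
theorem graphLaplacian_vecMulVec_one {T : ℕ} (N : Fin T → ℝ) :
    graphLaplacian (vecMulVec (fun _ => (1 : ℝ)) N) =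
      (∑ r, N r) • (1 : Matrix (Fin T) (Fin T) ℝ) - vecMulVec (fun _ => (1 : ℝ)) N := by
  simp [graphLaplacian, vecMulVec_apply, smul_one_eq_diagonal]

/-- `𝟙 Nᵀ` is idempotent up to the factor `∑ r, N r`. -/
theorem vecMulVec_one_mul_self {T : ℕ} (N : Fin T → ℝ) :
    vecMulVec (fun _ : Fin T => (1 : ℝ)) N * vecMulVec (fun _ : Fin T => (1 : ℝ)) N =
      (∑ r, N r) • vecMulVec (fun _ => (1 : ℝ)) N := by
  ext i j
  simp [Matrix.mul_apply, vecMulVec_apply, Finset.sum_mul]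

/-- The inverse of the regularized Laplacian of `𝟙 Nᵀ` is the matrix that shrinks toward the
`N`-weighted mean. -/
theorem inv_one_add_smul_graphLaplacian {T : ℕ} {lam : ℝ} (hlam : lam ≠ 0) {N : Fin T → ℝ}
    (hN : ∑ r, N r ≠ 0) :
    (1 + ((1 - lam) / (lam * ∑ r, N r)) •
      graphLaplacian (vecMulVec (fun _ => (1 : ℝ)) N))⁻¹ =
      lam • (1 : Matrix (Fin T) (Fin T) ℝ) +
        ((1 - lam) / ∑ r, N r) • vecMulVec (fun _ => (1 : ℝ)) N := by
  apply Matrix.inv_eq_right_inv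
  rw [graphLaplacian_vecMulVec_one]
  have hJ := vecMulVec_one_mul_self N
  generalize vecMulVec (fun _ => (1 : ℝ)) N = J at hJ ⊢
  generalize ∑ r, N r = S at hN hJ ⊢
  simp only [add_mul, mul_add, sub_mul, smul_mul_assoc, mul_smul_comm, one_mul, mul_one, hJ]
  match_scalars <;> field_simp <;> ring

/-- Shrinkage toward the pooled mean is of MTA form:
`Ŷ_t = λ ȳ_t + (1−λ)/(∑ N_r) ∑_s N_s ȳ_s` satisfies
`Ŷ = (I + ((1−λ)/(λ Nᵀ𝟙)) L(𝟙 Nᵀ))⁻¹ ȳ`. -/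
theorem shrinkage_to_pooled_mean_is_mta_form (T : ℕ) (hT : 1 ≤ T)
    (lam : ℝ) (hlam0 : 0 < lam) (hlam1 : lam ≤ 1)
    (N : Fin T → ℝ) (hN : ∀ t, 0 < N t)
    (ybar : Fin T → ℝ)
    (Yhat : Fin T → ℝ)
    (hYhat : Yhat = fun t =>
      lam * ybar t + ((1 - lam) / ∑ r, N r) * ∑ s, N s * ybar s) :
    Yhat = ((1 + ((1 - lam) / (lam * (N ⬝ᵥ fun _ => (1 : ℝ)))) •
      graphLaplacian (Matrix.vecMulVec (fun _ => (1 : ℝ)) N))⁻¹).mulVec ybar := by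
  have hS : ∑ r, N r ≠ 0 :=
    (Finset.sum_pos (fun t _ => hN t) ⟨⟨0, hT⟩, Finset.mem_univ _⟩).ne'
  have hdot : (N ⬝ᵥ fun _ => (1 : ℝ)) = ∑ r, N r := by simp [dotProduct]
  rw [hdot, inv_one_add_smul_graphLaplacian hlam0.ne' hS, hYhat]
  ext t
  simp [add_mulVec, smul_mulVec, vecMulVec_mulVec, dotProduct]
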